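/- Let 0 < r* < A, λ > 0, define E1(x) = ∫_x^∞ e^{−z}/z dz for x > 0 and f_0(R) = (1 − e^{1/r*}·E1(1/r*))·(R − A) + ∫_{1/A}^{1/R} E1(x)·(e^x/x) dx. Suppose f : (0, A] → ℝ is bounded, continuous, twice continuously differentiable on (0, A), satisfies f(A) = 0, and solves −λ·f(R) + f′(R) + R²·f″(R) = e^{1/R}·E1(1/R) − e^{1/r*}·E1(1/r*) for all R ∈ (0, A). Then f satisfies the integral equation f(R) = f_0(R) − λ·∫_{1/A}^{1/R} (e^x/x²)·(∫_x^∞ e^{−z}·f(1/z) dz) dx for every R ∈ (0, A]. -/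

import Mathlib

open MeasureTheory Real Set

/-- The exponential integral `E1 x = ∫_x^∞ e^{-z}/z dz`. -/
noncomputable def E1 (x : ℝ) : ℝ := ∫ z in Set.Ioi x, Real.exp (-z) / z

/-!
In the variable `x = 1 / R` put `p x = f' (1 / x)`. An equation `f' R + R² f'' R = w (1 / R)`
becomes `p' x = p x - w x`, so `e^{-x} p x` has the derivative `-e^{-x} w x`, which is integrable at
infinity, and hence converges as `x → ∞`. A nonzero limit would make the derivative `-p x / x²` of
`x ↦ f (1 / x)` grow like `e^x / x²`, which the boundedness of `f` forbids by the mean value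
theorem. Hence `p x = e^x ∫_x^∞ e^{-z} w z dz`, and one further integration gives `f`. For
`w z = λ f (1 / z) + e^z E1 z - K` the part of the inner integral not involving `f` is explicit,
since `x E1 x - e^{-x}` is a primitive of `E1`.
-/

open Filter Topology

section Calculus

theorem not_tendsto_abs_deriv_atTop_of_abs_le {g g' : ℝ → ℝ} {a C : ℝ}
    (hg : ∀ x ∈ Ioi a, HasDerivAt g (g' x) x) (hC : ∀ x ∈ Ioi a, |g x| ≤ C) :
    ¬ Tendsto (fun x => |g' x|) atTop atTop := by
  intro hlim
  obtain ⟨X, hX⟩ :=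
    eventually_atTop.1 ((hlim.eventually_gt_atTop (2 * C)).and (eventually_gt_atTop a))
  have hderiv : ∀ x, X ≤ x → HasDerivAt g (g' x) x := fun x hx => hg x (hX x hx).2
  obtain ⟨c, hc, hslope⟩ := exists_hasDerivAt_eq_slope g g' (lt_add_one X)
    (fun x hx => (hderiv x hx.1).continuousAt.continuousWithinAt)
    (fun x hx => hderiv x hx.1.le)
  have hsmall : |g' c| ≤ 2 * C :=
    calc |g' c| = |g (X + 1) - g X| := by rw [hslope, add_sub_cancel_left, div_one]
      _ ≤ |g (X + 1)| + |g X| := abs_sub _ _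
      _ ≤ C + C := add_le_add (hC _ (hX _ (lt_add_one X).le).2) (hC _ (hX X le_rfl).2)
      _ = 2 * C := (two_mul C).symm
  exact hsmall.not_gt (hX c hc.1.le).1

theorem hasDerivAt_integral_Ioi {E : Type*} [NormedAddCommGroup E] [NormedSpace ℝ E]
    [CompleteSpace E] {h : ℝ → E} {a x : ℝ} (hax : a < x) (hint : IntegrableOn h (Ioi a))
    (hcont : ContinuousAt h x) : HasDerivAt (fun y => ∫ z in Ioi y, h z) (-h x) x := by
  have hax_int : IntervalIntegrable h volume a x :=
    (intervalIntegrable_iff_integrableOn_Ioc_of_le hax.le).2 (hint.mono_set Ioc_subset_Ioi_self)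
  have hmeas : StronglyMeasurableAtFilter h (𝓝 x) :=
    ⟨Ioi a, Ioi_mem_nhds hax, hint.aestronglyMeasurable⟩
  have hprim : HasDerivAt (fun y => (∫ z in Ioi a, h z) - ∫ z in a..y, h z) (-h x) x :=
    (intervalIntegral.integral_hasDerivAt_right hax_int hmeas hcont).const_sub _
  refine hprim.congr_of_eventuallyEq ?_
  filter_upwards [Ioi_mem_nhds hax] with y hy
  rw [← intervalIntegral.integral_Ioi_sub_Ioi hint (le_of_lt hy), sub_sub_cancel]

theorem hasDerivAt_exp_neg (x : ℝ) : HasDerivAt (fun y => exp (-y)) (-exp (-x)) x := by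
  simpa using (hasDerivAt_neg x).exp

theorem hasDerivAt_comp_one_div {f : ℝ → ℝ} {f' x : ℝ} (hx : x ≠ 0)
    (hf : HasDerivAt f f' (1 / x)) : HasDerivAt (fun y => f (1 / y)) (-f' / x ^ 2) x := by
  simp only [one_div] at hf ⊢
  exact (hf.comp x (hasDerivAt_inv hx)).congr_deriv (by ring)

theorem integral_one_div_sq {a b : ℝ} (h0 : (0 : ℝ) ∉ uIcc a b) :
    ∫ x in a..b, 1 / x ^ 2 = 1 / a - 1 / b :=
  calc ∫ x in a..b, 1 / x ^ 2 = ∫ x in a..b, x ^ (-2 : ℤ) := by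
        simp only [one_div, zpow_neg, zpow_ofNat]
    _ = (b ^ (-2 + 1 : ℤ) - a ^ (-2 + 1 : ℤ)) / ((-2 : ℤ) + 1) :=
        integral_zpow (Or.inr ⟨by decide, h0⟩)
    _ = 1 / a - 1 / b := by norm_num; ring

end Calculus

section ExponentialIntegral

variable {x : ℝ}

theorem exp_neg_div_le_of_le {z : ℝ} (hx : 0 < x) (hxz : x ≤ z) :
    exp (-z) / z ≤ exp (-z) / x := by
  gcongr

theorem integrableOn_exp_neg_div_Ioi (hx : 0 < x) :
    IntegrableOn (fun z => exp (-z) / z) (Ioi x) := by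
  refine Integrable.mono' ((integrableOn_exp_neg_Ioi x).div_const x)
    (by fun_prop : Measurable _).aestronglyMeasurable
    (ae_restrict_of_forall_mem measurableSet_Ioi fun z (hz : x < z) => ?_)
  have hz0 : 0 < z := hx.trans hz
  rw [norm_of_nonneg (by positivity)]
  exact exp_neg_div_le_of_le hx hz.le

theorem E1_nonneg (hx : 0 < x) : 0 ≤ E1 x :=
  setIntegral_nonneg measurableSet_Ioi fun _ hz =>
    div_nonneg (exp_pos _).le (hx.trans hz).le

theorem E1_le (hx : 0 < x) : E1 x ≤ exp (-x) / x :=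
  calc E1 x ≤ ∫ z in Ioi x, exp (-z) / x :=
        setIntegral_mono_on (integrableOn_exp_neg_div_Ioi hx)
          ((integrableOn_exp_neg_Ioi x).div_const x) measurableSet_Ioi
          fun _ hz => exp_neg_div_le_of_le hx (le_of_lt hz)
    _ = exp (-x) / x := by rw [integral_div, integral_exp_neg_Ioi]

theorem hasDerivAt_E1 (hx : 0 < x) : HasDerivAt E1 (-(exp (-x) / x)) x :=
  hasDerivAt_integral_Ioi (half_lt_self hx) (integrableOn_exp_neg_div_Ioi (half_pos hx))
    (ContinuousAt.div (by fun_prop) continuousAt_id hx.ne')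

theorem continuousOn_E1 : ContinuousOn E1 (Ioi 0) :=
  fun _ hx => (hasDerivAt_E1 hx).continuousAt.continuousWithinAt

theorem hasDerivAt_mul_E1_sub_exp_neg (hx : 0 < x) :
    HasDerivAt (fun y => y * E1 y - exp (-y)) (E1 x) x := by
  refine (((hasDerivAt_id' x).fun_mul (hasDerivAt_E1 hx)).fun_sub
    (hasDerivAt_exp_neg x)).congr_deriv ?_
  field_simp
  ring

theorem tendsto_mul_E1_sub_exp_neg_atTop :
    Tendsto (fun x => x * E1 x - exp (-x)) atTop (𝓝 0) := by
  have hexp : Tendsto (fun x : ℝ => exp (-x)) atTop (𝓝 0) := tendsto_exp_neg_atTop_nhds_zero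
  have hmul : Tendsto (fun x => x * E1 x) atTop (𝓝 0) := by
    refine tendsto_of_tendsto_of_tendsto_of_le_of_le' tendsto_const_nhds hexp ?_ ?_ <;>
      filter_upwards [eventually_gt_atTop 0] with x hx
    · exact mul_nonneg hx.le (E1_nonneg hx)
    · exact (le_div_iff₀' hx).1 (E1_le hx)
  simpa using hmul.sub hexp

theorem integrableOn_E1_Ioi (hx : 0 < x) : IntegrableOn E1 (Ioi x) :=
  integrableOn_Ioi_deriv_of_nonneg'
    (fun _ hy => hasDerivAt_mul_E1_sub_exp_neg (hx.trans_le hy))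
    (fun _ hy => E1_nonneg (hx.trans hy)) tendsto_mul_E1_sub_exp_neg_atTop

theorem integral_E1_Ioi (hx : 0 < x) : ∫ z in Ioi x, E1 z = exp (-x) - x * E1 x := by
  rw [integral_Ioi_of_hasDerivAt_of_tendsto'
    (fun _ hy => hasDerivAt_mul_E1_sub_exp_neg (hx.trans_le hy)) (integrableOn_E1_Ioi hx)
    tendsto_mul_E1_sub_exp_neg_atTop]
  ring

end ExponentialIntegral

section BoundedSolutions

variable {g p : ℝ → ℝ} {a C : ℝ}

theorem eq_zero_of_tendsto_exp_neg_mul_of_abs_le {L : ℝ}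
    (hg : ∀ x ∈ Ioi a, HasDerivAt g (-p x / x ^ 2) x) (hC : ∀ x ∈ Ioi a, |g x| ≤ C)
    (hL : Tendsto (fun x => exp (-x) * p x) atTop (𝓝 L)) : L = 0 := by
  by_contra hL0
  refine not_tendsto_abs_deriv_atTop_of_abs_le hg hC ?_
  refine ((tendsto_exp_div_pow_atTop 2).atTop_mul_pos (abs_pos.2 hL0) hL.abs).congr fun x => ?_
  rw [abs_mul, abs_exp, exp_neg, abs_div, abs_neg, abs_of_nonneg (sq_nonneg x)]
  field_simp

theorem eq_exp_mul_integral_Ioi_of_abs_le {w : ℝ → ℝ}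
    (hg : ∀ x ∈ Ioi a, HasDerivAt g (-p x / x ^ 2) x) (hC : ∀ x ∈ Ioi a, |g x| ≤ C)
    (hp : ∀ x ∈ Ioi a, HasDerivAt p (p x - w x) x)
    (hw : IntegrableOn (fun z => exp (-z) * w z) (Ioi a)) {x : ℝ} (hx : a < x) :
    p x = exp x * ∫ z in Ioi x, exp (-z) * w z := by
  have hderiv : ∀ y ∈ Ioi a, HasDerivAt (fun y => exp (-y) * p y) (-(exp (-y) * w y)) y :=
    fun y hy => ((hasDerivAt_exp_neg y).fun_mul (hp y hy)).congr_deriv (by ring)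
  have hlim := tendsto_limUnder_of_hasDerivAt_of_integrableOn_Ioi hderiv hw.neg
  rw [eq_zero_of_tendsto_exp_neg_mul_of_abs_le hg hC hlim] at hlim
  have htail := integral_Ioi_of_hasDerivAt_of_tendsto'
    (fun y hy => hderiv y (hx.trans_le hy))
    (hw.neg.mono_set (Ioi_subset_Ioi hx.le)) hlim
  rw [integral_neg, zero_sub, neg_inj] at htail
  rw [htail, ← mul_assoc, ← exp_add, add_neg_cancel, exp_zero, one_mul]

theorem one_div_mem_Ioc_of_one_div_le {A x : ℝ} (hA : 0 < A) (hx : 1 / A ≤ x) :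
    1 / x ∈ Ioc 0 A :=
  have hx0 : 0 < x := (one_div_pos.2 hA).trans_le hx
  ⟨one_div_pos.2 hx0, (one_div_le hA hx0).1 hx⟩

theorem one_div_mem_Ioo_of_one_div_lt {A x : ℝ} (hA : 0 < A) (hx : 1 / A < x) :
    1 / x ∈ Ioo 0 A :=
  have hx0 : 0 < x := (one_div_pos.2 hA).trans hx
  ⟨one_div_pos.2 hx0, (one_div_lt hA hx0).1 hx⟩

theorem continuousOn_comp_one_div_Ici {f : ℝ → ℝ} {A : ℝ} (hA : 0 < A)
    (hf : ContinuousOn f (Ioc 0 A)) : ContinuousOn (fun x => f (1 / x)) (Ici (1 / A)) :=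
  hf.comp (ContinuousOn.div (by fun_prop) (by fun_prop)
    fun _ hx => ((one_div_pos.2 hA).trans_le hx).ne')
    fun _ hx => one_div_mem_Ioc_of_one_div_le hA hx

theorem hasDerivAt_deriv_comp_one_div {f' w : ℝ → ℝ} {f'' x : ℝ} (hx : x ≠ 0)
    (hf' : HasDerivAt f' f'' (1 / x)) (hode : f' (1 / x) + (1 / x) ^ 2 * f'' = w x) :
    HasDerivAt (fun y => f' (1 / y)) (f' (1 / x) - w x) x :=
  (hasDerivAt_comp_one_div hx hf').congr_deriv (by rw [← hode]; ring)

theorem continuousOn_exp_div_sq_mul_integral_Ioi {h : ℝ → ℝ} (ha : 0 < a)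
    (hh : IntegrableOn h (Ioi a)) :
    ContinuousOn (fun x => exp x / x ^ 2 * ∫ z in Ioi x, h z) (Ici a) :=
  (ContinuousOn.div (by fun_prop) (by fun_prop)
    fun _ hx => pow_ne_zero 2 (ha.trans_le hx).ne').mul hh.continuousOn_Ici_primitive_Ioi

theorem eq_sub_integral_of_abs_le_of_ode {f f' f'' w : ℝ → ℝ} {A : ℝ}
    (hbdd : ∀ x ∈ Ioo 0 A, |f x| ≤ C) (hcont : ContinuousOn f (Ioc 0 A))
    (hf : ∀ x ∈ Ioo 0 A, HasDerivAt f (f' x) x) (hf' : ∀ x ∈ Ioo 0 A, HasDerivAt f' (f'' x) x)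
    (hode : ∀ x ∈ Ioo 0 A, f' x + x ^ 2 * f'' x = w (1 / x))
    (hw : IntegrableOn (fun z => exp (-z) * w z) (Ioi (1 / A))) {R : ℝ} (hR : R ∈ Ioc 0 A) :
    f R = f A - ∫ x in (1 / A)..(1 / R), exp x / x ^ 2 * ∫ z in Ioi x, exp (-z) * w z := by
  have hA : 0 < A := hR.1.trans_le hR.2
  have hA' : 0 < 1 / A := one_div_pos.2 hA
  have hle : 1 / A ≤ 1 / R := one_div_le_one_div_of_le hR.1 hR.2
  have hne : ∀ x ∈ Ioi (1 / A), x ≠ 0 := fun _ hx => (hA'.trans hx).ne'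
  have hmem : ∀ x ∈ Ioi (1 / A), 1 / x ∈ Ioo 0 A := fun _ => one_div_mem_Ioo_of_one_div_lt hA
  have hg : ∀ x ∈ Ioi (1 / A), HasDerivAt (fun y => f (1 / y)) (-f' (1 / x) / x ^ 2) x :=
    fun x hx => hasDerivAt_comp_one_div (hne x hx) (hf _ (hmem x hx))
  have hp : ∀ x ∈ Ioi (1 / A), HasDerivAt (fun y => f' (1 / y)) (f' (1 / x) - w x) x :=
    fun x hx => hasDerivAt_deriv_comp_one_div (hne x hx) (hf' _ (hmem x hx))
      (by rw [hode _ (hmem x hx), one_div_one_div])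
  have hp_eq : ∀ x ∈ Ioi (1 / A), f' (1 / x) = exp x * ∫ z in Ioi x, exp (-z) * w z :=
    fun x hx => eq_exp_mul_integral_Ioi_of_abs_le hg (fun y hy => hbdd _ (hmem y hy)) hp hw hx
  have hint := ((continuousOn_exp_div_sq_mul_integral_Ioi hA' hw).mono
    Icc_subset_Ici_self).intervalIntegrable_of_Icc (μ := volume) hle
  have hftc := intervalIntegral.integral_eq_sub_of_hasDerivAt_of_le hle
    (f' := fun x => -(exp x / x ^ 2 * ∫ z in Ioi x, exp (-z) * w z))
    ((continuousOn_comp_one_div_Ici hA hcont).mono Icc_subset_Ici_self)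
    (fun x hx => (hg x hx.1).congr_deriv (by rw [hp_eq x hx.1, neg_div, mul_div_right_comm]))
    hint.neg
  rw [intervalIntegral.integral_neg, one_div_one_div, one_div_one_div] at hftc
  linarith

end BoundedSolutions

section Source

variable {f : ℝ → ℝ} {x : ℝ}

theorem integrableOn_exp_neg_mul_comp_one_div {A C : ℝ} (hA : 0 < A)
    (hbdd : ∀ x ∈ Ioc 0 A, |f x| ≤ C) (hcont : ContinuousOn f (Ioc 0 A)) :
    IntegrableOn (fun z => exp (-z) * f (1 / z)) (Ioi (1 / A)) :=
  (integrableOn_exp_neg_Ioi (1 / A)).mul_bdd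
    (((continuousOn_comp_one_div_Ici hA hcont).mono Ioi_subset_Ici_self).aestronglyMeasurable
      measurableSet_Ioi)
    (ae_restrict_of_forall_mem measurableSet_Ioi fun _ hz =>
      hbdd _ (one_div_mem_Ioc_of_one_div_le hA (le_of_lt hz)))

/-- The equation `-λ f R + f' R + R² f'' R = e^{1/R} E1 (1/R) - K` is
`f' R + R² f'' R = reciprocalSource λ K f (1 / R)`: the terms without derivatives of `f`, as a
function of the reciprocal variable `z = 1 / R`. -/
noncomputable def reciprocalSource (lam K : ℝ) (f : ℝ → ℝ) (z : ℝ) : ℝ :=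
  lam * f (1 / z) + (exp z * E1 z - K)

theorem exp_neg_mul_reciprocalSource (lam K : ℝ) (f : ℝ → ℝ) (z : ℝ) :
    exp (-z) * reciprocalSource lam K f z =
      lam * (exp (-z) * f (1 / z)) + (E1 z - K * exp (-z)) := by
  have hexp : exp (-z) * exp z = 1 := by rw [← exp_add, neg_add_cancel, exp_zero]
  rw [reciprocalSource]
  linear_combination E1 z * hexp

theorem integrableOn_E1_sub_const_mul_exp_neg (K : ℝ) (hx : 0 < x) :
    IntegrableOn (fun z => E1 z - K * exp (-z)) (Ioi x) :=
  (integrableOn_E1_Ioi hx).sub ((integrableOn_exp_neg_Ioi x).const_mul K)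

theorem integrableOn_exp_neg_mul_reciprocalSource (lam K : ℝ) (hx : 0 < x)
    (hf : IntegrableOn (fun z => exp (-z) * f (1 / z)) (Ioi x)) :
    IntegrableOn (fun z => exp (-z) * reciprocalSource lam K f z) (Ioi x) := by
  simp only [exp_neg_mul_reciprocalSource]
  exact (hf.const_mul lam).add (integrableOn_E1_sub_const_mul_exp_neg K hx)

theorem integral_exp_neg_mul_reciprocalSource (lam K : ℝ) (hx : 0 < x)
    (hf : IntegrableOn (fun z => exp (-z) * f (1 / z)) (Ioi x)) :
    ∫ z in Ioi x, exp (-z) * reciprocalSource lam K f z =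
      lam * (∫ z in Ioi x, exp (-z) * f (1 / z)) + ((1 - K) * exp (-x) - x * E1 x) := by
  simp only [exp_neg_mul_reciprocalSource]
  rw [integral_add (hf.const_mul lam) (integrableOn_E1_sub_const_mul_exp_neg K hx),
    integral_const_mul,
    integral_sub (integrableOn_E1_Ioi hx) ((integrableOn_exp_neg_Ioi x).const_mul K),
    integral_const_mul, integral_E1_Ioi hx, integral_exp_neg_Ioi]
  ring

theorem exp_div_sq_mul_integral_reciprocalSource (lam K : ℝ) (hx : 0 < x)
    (hf : IntegrableOn (fun z => exp (-z) * f (1 / z)) (Ioi x)) :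
    exp x / x ^ 2 * ∫ z in Ioi x, exp (-z) * reciprocalSource lam K f z =
      lam * (exp x / x ^ 2 * ∫ z in Ioi x, exp (-z) * f (1 / z)) +
        ((1 - K) * (1 / x ^ 2) - E1 x * (exp x / x)) := by
  rw [integral_exp_neg_mul_reciprocalSource lam K hx hf, exp_neg x]
  field_simp

theorem integral_exp_div_sq_mul_integral_reciprocalSource (lam K : ℝ) {a b : ℝ} (ha : 0 < a)
    (hab : a ≤ b) (hf : IntegrableOn (fun z => exp (-z) * f (1 / z)) (Ioi a)) :
    ∫ x in a..b, exp x / x ^ 2 * ∫ z in Ioi x, exp (-z) * reciprocalSource lam K f z =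
      lam * (∫ x in a..b, exp x / x ^ 2 * ∫ z in Ioi x, exp (-z) * f (1 / z)) +
        ((1 - K) * (1 / a - 1 / b) - ∫ x in a..b, E1 x * (exp x / x)) := by
  have hpos : ∀ x ∈ Icc a b, 0 < x := fun x hx => ha.trans_le hx.1
  have hf_int : IntervalIntegrable
      (fun x => exp x / x ^ 2 * ∫ z in Ioi x, exp (-z) * f (1 / z)) volume a b :=
    ((continuousOn_exp_div_sq_mul_integral_Ioi ha hf).mono
      Icc_subset_Ici_self).intervalIntegrable_of_Icc hab
  have hE1_int : IntervalIntegrable (fun x => E1 x * (exp x / x)) volume a b :=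
    ContinuousOn.intervalIntegrable_of_Icc hab <|
      (continuousOn_E1.mono hpos).mul
        (ContinuousOn.div (by fun_prop) (by fun_prop) fun x hx => (hpos x hx).ne')
  have hsq_int : IntervalIntegrable (fun x : ℝ => 1 / x ^ 2) volume a b :=
    ContinuousOn.intervalIntegrable_of_Icc hab <|
      ContinuousOn.div (by fun_prop) (by fun_prop) fun x hx => pow_ne_zero 2 (hpos x hx).ne'
  have hintegrand : EqOn
      (fun x => exp x / x ^ 2 * ∫ z in Ioi x, exp (-z) * reciprocalSource lam K f z)
      (fun x => lam * (exp x / x ^ 2 * ∫ z in Ioi x, exp (-z) * f (1 / z)) +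
        ((1 - K) * (1 / x ^ 2) - E1 x * (exp x / x))) (uIcc a b) := fun x hx => by
    rw [uIcc_of_le hab] at hx
    exact exp_div_sq_mul_integral_reciprocalSource lam K (hpos x hx)
      (hf.mono_set (Ioi_subset_Ioi hx.1))
  rw [intervalIntegral.integral_congr hintegrand,
    intervalIntegral.integral_add (hf_int.const_mul _) ((hsq_int.const_mul _).sub hE1_int),
    intervalIntegral.integral_sub (hsq_int.const_mul _) hE1_int,
    intervalIntegral.integral_const_mul, intervalIntegral.integral_const_mul,
    integral_one_div_sq (notMem_uIcc_of_lt ha (ha.trans_le hab))]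

end Source

theorem statement9_general {A C lam K : ℝ} {f f' f'' : ℝ → ℝ}
    (hbdd : ∀ x ∈ Ioc 0 A, |f x| ≤ C) (hcont : ContinuousOn f (Ioc 0 A))
    (hf : ∀ x ∈ Ioo 0 A, HasDerivAt f (f' x) x) (hf' : ∀ x ∈ Ioo 0 A, HasDerivAt f' (f'' x) x)
    (hode : ∀ x ∈ Ioo 0 A,
      -(lam * f x) + f' x + x ^ 2 * f'' x = exp (1 / x) * E1 (1 / x) - K)
    {R : ℝ} (hR : R ∈ Ioc 0 A) :
    f R = f A + (1 - K) * (R - A) + (∫ x in (1 / A)..(1 / R), E1 x * (exp x / x)) -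
      lam * ∫ x in (1 / A)..(1 / R), exp x / x ^ 2 * ∫ z in Ioi x, exp (-z) * f (1 / z) := by
  have hA : 0 < A := hR.1.trans_le hR.2
  have hf_int := integrableOn_exp_neg_mul_comp_one_div hA hbdd hcont
  rw [eq_sub_integral_of_abs_le_of_ode (w := reciprocalSource lam K f)
      (fun x hx => hbdd x (Ioo_subset_Ioc_self hx)) hcont hf hf'
      (fun x hx => by rw [reciprocalSource, one_div_one_div]; linarith [hode x hx])
      (integrableOn_exp_neg_mul_reciprocalSource lam K (one_div_pos.2 hA) hf_int) hR,
    integral_exp_div_sq_mul_integral_reciprocalSource lam K (one_div_pos.2 hA)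
      (one_div_le_one_div_of_le hR.1 hR.2) hf_int, one_div_one_div, one_div_one_div]
  ring

/-- Any bounded twice continuously differentiable solution of the ODE
`-λ f + f' + R² f'' = e^{1/R} E1(1/R) - e^{1/r*} E1(1/r*)` on `(0, A)` with
`f(A) = 0` satisfies the integral equation
`f(R) = f_0(R) - λ ∫_{1/A}^{1/R} (e^x/x²) (∫_x^∞ e^{-z} f(1/z) dz) dx`. -/
theorem statement9 (rstar A lam : ℝ) (hrstar : 0 < rstar) (hrA : rstar < A)
    (hlam : 0 < lam)
    (f0 : ℝ → ℝ)
    (hf0 : ∀ R : ℝ, f0 R =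
      (1 - Real.exp (1 / rstar) * E1 (1 / rstar)) * (R - A) +
        ∫ x in (1 / A)..(1 / R), E1 x * (Real.exp x / x))
    (f : ℝ → ℝ)
    (hbdd : ∃ C : ℝ, ∀ x ∈ Set.Ioc (0:ℝ) A, |f x| ≤ C)
    (hcont : ContinuousOn f (Set.Ioc (0:ℝ) A))
    (hf1 : ∀ x ∈ Set.Ioo (0:ℝ) A, DifferentiableAt ℝ f x)
    (hf1c : ContinuousOn (deriv f) (Set.Ioo (0:ℝ) A))
    (hf2 : ∀ x ∈ Set.Ioo (0:ℝ) A, DifferentiableAt ℝ (deriv f) x)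
    (hf2c : ContinuousOn (deriv (deriv f)) (Set.Ioo (0:ℝ) A))
    (hfA : f A = 0)
    (hode : ∀ x ∈ Set.Ioo (0:ℝ) A,
      -(lam * f x) + deriv f x + x ^ 2 * deriv (deriv f) x =
        Real.exp (1 / x) * E1 (1 / x) - Real.exp (1 / rstar) * E1 (1 / rstar)) :
    ∀ R ∈ Set.Ioc (0:ℝ) A,
      f R = f0 R - lam * ∫ x in (1 / A)..(1 / R),
        (Real.exp x / x ^ 2) * (∫ z in Set.Ioi x, Real.exp (-z) * f (1 / z)) := by
  intro R hR
  obtain ⟨C, hC⟩ := hbdd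
  rw [hf0, statement9_general hC hcont (fun x hx => (hf1 x hx).hasDerivAt)
    (fun x hx => (hf2 x hx).hasDerivAt) hode hR, hfA, zero_add]
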